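/- arXiv:2209.02607 — 2 statements merged into one kernel-verified Lean document; each statement's English description precedes it below -/
import Mathlib

section
/- Let L be a first-order language (of arbitrary cardinality) and let M be a countable L-structure that is full, i.e., such that for every n ∈ ℕ, every subset of Mⁿ invariant under all automorphisms of M is definable in M without parameters. Then M is ℵ₀-categorical: every countable model of the complete first-order theory Th(M) is isomorphic to M. -/
open FirstOrder FirstOrder.Language

namespace FirstOrder.Language

variable {L : FirstOrder.Language} {M N : Type*} [L.Structure M] [L.Structure N] {α β : Type*}

/-- Two tuples, possibly in different structures, satisfy the same formulas. -/
def SameType (L : FirstOrder.Language) {M N α : Type*} [L.Structure M] [L.Structure N]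
    (a : α → M) (b : α → N) : Prop :=
  ∀ φ : L.Formula α, φ.Realize a ↔ φ.Realize b

/-- Every automorphism-invariant set of finite tuples is definable without parameters. -/
def IsFull (L : FirstOrder.Language) (M : Type*) [L.Structure M] : Prop :=
  ∀ (n : ℕ) (s : Set (Fin n → M)),
    (∀ (g : M ≃[L] M) (v : Fin n → M), v ∈ s ↔ (g ∘ v) ∈ s) →
      ∃ φ : L.Formula (Fin n), s = {v | φ.Realize v}

theorem SameType.comp {a : α → M} {b : α → N} (h : SameType L a b) (σ : β → α) :
    SameType L (a ∘ σ) (b ∘ σ) := fun φ => by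
  simpa only [Formula.realize_relabel] using h (φ.relabel σ)

theorem SameType.symm {a : α → M} {b : α → N} (h : SameType L a b) : SameType L b a :=
  fun φ => (h φ).symm

theorem SameType.trans {P : Type*} [L.Structure P] {a : α → M} {b : α → N} {c : α → P}
    (h : SameType L a b) (h' : SameType L b c) : SameType L a c :=
  fun φ => (h φ).trans (h' φ)

theorem SameType.eq_iff {a : α → M} {b : α → N} (h : SameType L a b) (i j : α) :
    a i = a j ↔ b i = b j := by
  simpa only [Formula.realize_equal, Term.realize_var] using
    h ((Term.var i : L.Term α).equal (Term.var j))

theorem sameType_equiv_comp (g : M ≃[L] N) (a : α → M) : SameType L a (g ∘ a) :=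
  fun φ => (StrongHomClass.realize_formula g φ).symm

theorem forall_realize_of_model_completeTheory [Finite α] (hN : N ⊨ L.completeTheory M)
    (φ : L.Formula α) (h : ∀ v : α → M, φ.Realize v) (w : α → N) : φ.Realize w := by
  let ψ : L.Sentence := (φ.relabel (Sum.inr : α → Empty ⊕ α)).iAlls α
  have hM : M ⊨ ψ := by
    simp only [ψ, Sentence.Realize, Formula.realize_iAlls, Formula.realize_relabel]
    exact fun i => h i
  have hψ := (realize_iff_of_model_completeTheory M N ψ).2 hM
  simp only [ψ, Sentence.Realize, Formula.realize_iAlls, Formula.realize_relabel] at hψ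
  exact hψ w

theorem sameType_of_isEmpty [IsEmpty α] (hN : N ⊨ L.completeTheory M) (a : α → M) (b : α → N) :
    SameType L a b := fun φ => by
  by_cases h : φ.Realize a
  · exact iff_of_true h (forall_realize_of_model_completeTheory hN φ
      (fun v => Subsingleton.elim a v ▸ h) b)
  · exact iff_of_false h (forall_realize_of_model_completeTheory hN φ.not
      (fun v => Subsingleton.elim a v ▸ h) b)

theorem IsFull.exists_formula [Finite α] (hM : IsFull L M) (s : Set (α → M))
    (hs : ∀ (g : M ≃[L] M) (v : α → M), v ∈ s ↔ (g ∘ v) ∈ s) :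
    ∃ φ : L.Formula α, ∀ v, φ.Realize v ↔ v ∈ s := by
  obtain ⟨n, ⟨e⟩⟩ := Finite.exists_equiv_fin α
  obtain ⟨φ, hφ⟩ := hM n {v | v ∘ e ∈ s} (fun g v => hs g (v ∘ e))
  refine ⟨φ.relabel e.symm, fun v => ?_⟩
  have hv : (v ∘ e.symm) ∘ e = v := funext fun i => congrArg v (e.symm_apply_apply i)
  have := Set.ext_iff.1 hφ (v ∘ e.symm)
  rw [Set.mem_ofPred_eq, hv] at this
  rw [Formula.realize_relabel, this, Set.mem_ofPred_eq]

/-- The equivalence relation on tuples of lying in the same automorphism orbit. -/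
def orbitSetoid (L : FirstOrder.Language) (M α : Type*) [L.Structure M] : Setoid (α → M) where
  r v w := ∃ g : M ≃[L] M, g ∘ v = w
  iseqv :=
    { refl := fun _ => ⟨Equiv.refl L M, rfl⟩
      symm := by
        rintro v _ ⟨g, rfl⟩
        exact ⟨g.symm, funext fun i => g.symm_apply_apply (v i)⟩
      trans := by
        rintro v _ _ ⟨g, rfl⟩ ⟨g', rfl⟩
        exact ⟨g'.comp g, rfl⟩ }

theorem orbit_mk_comp (g : M ≃[L] M) (v : α → M) :
    (Quotient.mk (orbitSetoid L M α) (g ∘ v)) = Quotient.mk (orbitSetoid L M α) v :=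
  (Quotient.sound ⟨g, rfl⟩ : Quotient.mk (orbitSetoid L M α) v = _).symm

theorem IsFull.exists_orbit_formula [Finite α] (hM : IsFull L M)
    (q : Quotient (orbitSetoid L M α)) :
    ∃ φ : L.Formula α, ∀ w : α → M, φ.Realize w ↔ Quotient.mk (orbitSetoid L M α) w = q :=
  hM.exists_formula {w | Quotient.mk (orbitSetoid L M α) w = q} fun g v => by
    simp only [Set.mem_ofPred_eq, orbit_mk_comp]

theorem IsFull.exists_equiv [Finite α] (hM : IsFull L M) {a b : α → M} (h : SameType L a b) :
    ∃ g : M ≃[L] M, g ∘ a = b := by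
  obtain ⟨φ, hφ⟩ := hM.exists_orbit_formula (Quotient.mk _ a)
  exact Quotient.exact ((hφ b).1 ((h φ).1 ((hφ a).2 rfl))).symm

/-- A formula defining the automorphism orbit of a tuple isolates its type. -/
theorem sameType_of_realize_orbit [Finite α] (hN : N ⊨ L.completeTheory M) {φ : L.Formula α}
    {a : α → M} (hφ : ∀ w : α → M, φ.Realize w ↔
      Quotient.mk (orbitSetoid L M α) w = Quotient.mk _ a)
    {b : α → N} (hb : φ.Realize b) : SameType L a b := by
  have key : ∀ ψ : L.Formula α, ψ.Realize a → ψ.Realize b := fun ψ hψ => by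
    refine Formula.realize_imp.1
      (forall_realize_of_model_completeTheory hN (φ.imp ψ) (fun v => ?_) b) hb
    rw [Formula.realize_imp, hφ]
    intro hv
    obtain ⟨g, rfl⟩ := Quotient.exact hv.symm
    exact (sameType_equiv_comp g a ψ).1 hψ
  exact fun ψ => ⟨key ψ, fun h => by_contra fun hn => key ψ.not hn h⟩

/-- An almost disjoint family of functions on an infinite countable type, indexed by the subsets
of `ℕ`. -/
theorem exists_almostDisjoint_family (Q : Type*) [Countable Q] [Infinite Q] :
    ∃ f : Set ℕ → Q → Q, ∀ A B, A ≠ B → {q | f A q = f B q}.Finite := by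
  classical
  obtain ⟨e⟩ : Nonempty (Q ≃ ℕ) := nonempty_equiv_of_countable
  refine ⟨fun A q => e.symm (Encodable.encode ((Finset.range (e q)).filter (· ∈ A))),
    fun A B hAB => ?_⟩
  obtain ⟨i, hi⟩ : ∃ i, ¬(i ∈ A ↔ i ∈ B) := by
    by_contra! h
    exact hAB (Set.ext h)
  refine ((Set.finite_Iic i).preimage (e.injective.injOn)).subset fun q hq => ?_
  by_contra hlt
  have hlt : i < e q := by simpa using hlt
  have := Finset.ext_iff.1 (Encodable.encode_injective (e.symm.injective hq)) i
  simp only [Finset.mem_filter, Finset.mem_range, hlt, true_and] at this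
  exact hi this

/-- Every finite tuple of a countable model has the type of a tuple of the full structure. -/
theorem IsFull.exists_sameType [Finite α] [Countable M] [Countable N] (hM : IsFull L M)
    (hN : N ⊨ L.completeTheory M) (b : α → N) : ∃ a : α → M, SameType L a b := by
  let Q := Quotient (orbitSetoid L M α)
  let mk : (α → M) → Q := Quotient.mk _
  choose φ hφ using hM.exists_orbit_formula (α := α)
  by_contra! hb
  have hφb : ∀ q : Q, ¬(φ q).Realize b := by
    intro q
    induction q using Quotient.inductionOn with
    | h a => exact fun h => hb a (sameType_of_realize_orbit hN (hφ _) h)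
  have hfin : ∀ (S : Set Q), S.Finite → ∀ ψ : L.Formula α,
      (∀ w : α → M, ψ.Realize w → mk w ∈ S) → ¬ψ.Realize b := by
    intro S hS ψ hψ hψb
    have : Finite S := hS
    have h := forall_realize_of_model_completeTheory hN
      (ψ.imp (Formula.iSup fun q : S => φ q)) (fun w => by
        rw [Formula.realize_imp, Formula.realize_iSup]
        exact fun hw => ⟨⟨mk w, hψ w hw⟩, (hφ _ w).2 rfl⟩) b
    rw [Formula.realize_imp, Formula.realize_iSup] at h
    obtain ⟨q, hq⟩ := h hψb
    exact hφb q hq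
  rcases finite_or_infinite Q with hQ | hQ
  · exact hfin Set.univ Set.finite_univ ⊤ (fun _ _ => trivial) (Formula.realize_top.2 trivial)
  obtain ⟨f, hf⟩ := exists_almostDisjoint_family Q
  have hρ : ∀ A : Set ℕ, ∃ ρ : L.Formula (α ⊕ α), ∀ v : α ⊕ α → M,
      ρ.Realize v ↔ f A (mk (v ∘ Sum.inl)) = mk (v ∘ Sum.inr) := fun A =>
    hM.exists_formula {v | f A (mk (v ∘ Sum.inl)) = mk (v ∘ Sum.inr)} fun g v => by
      simp only [Set.mem_ofPred_eq, mk, Function.comp_assoc, orbit_mk_comp]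
  choose ρ hρ using hρ
  have hy : ∀ A, ∃ y : α → N, (ρ A).Realize (Sum.elim b y) := fun A => by
    rw [← Formula.realize_iExs]
    refine forall_realize_of_model_completeTheory hN _ (fun x => ?_) b
    rw [Formula.realize_iExs]
    obtain ⟨y, hy⟩ := Quotient.exists_rep (f A (mk x))
    refine ⟨y, (hρ A _).2 ?_⟩
    rw [Sum.elim_comp_inl, Sum.elim_comp_inr]
    exact hy.symm
  choose y hy using hy
  have hinj : Function.Injective y := fun A B hAB => by
    by_contra hne
    refine hfin _ (hf A B hne) ((ρ A ⊓ ρ B).iExs α) (fun w hw => ?_) ?_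
    · obtain ⟨z, hz⟩ := Formula.realize_iExs.1 hw
      rw [Formula.realize_inf, hρ, hρ, Sum.elim_comp_inl, Sum.elim_comp_inr] at hz
      exact hz.1.trans hz.2.symm
    · exact Formula.realize_iExs.2 ⟨y A, Formula.realize_inf.2 ⟨hy A, hAB ▸ hy B⟩⟩
  obtain ⟨c, hc⟩ := exists_injective_nat (α → N)
  exact Function.cantor_injective (c ∘ y) (hc.comp hinj)

theorem IsFull.exists_extension_right [Finite α] (hM : IsFull L M)
    (hN : N ⊨ L.completeTheory M) {a : α → M} {b : α → N} (h : SameType L a b) (c : M) :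
    ∃ d : N, SameType L (Sum.elim a fun _ : Unit => c) (Sum.elim b fun _ => d) := by
  obtain ⟨φ, hφ⟩ := hM.exists_orbit_formula
    (Quotient.mk _ (Sum.elim a fun _ : Unit => c))
  obtain ⟨d, hd⟩ := Formula.realize_iExs.1 ((h (φ.iExs Unit)).1
    (Formula.realize_iExs.2 ⟨fun _ => c, (hφ _).2 rfl⟩))
  exact ⟨d (), sameType_of_realize_orbit hN hφ hd⟩

theorem IsFull.exists_extension_left [Finite α] [Countable M] [Countable N] (hM : IsFull L M)
    (hN : N ⊨ L.completeTheory M) {a : α → M} {b : α → N} (h : SameType L a b) (d : N) :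
    ∃ c : M, SameType L (Sum.elim a fun _ : Unit => c) (Sum.elim b fun _ => d) := by
  obtain ⟨a', haa⟩ := hM.exists_sameType hN (Sum.elim b fun _ : Unit => d)
  have hb : SameType L (a' ∘ Sum.inl) b := haa.comp Sum.inl
  obtain ⟨g, hg⟩ := hM.exists_equiv (hb.trans h.symm)
  refine ⟨g (a' (Sum.inr ())), ?_⟩
  have : (Sum.elim a fun _ : Unit => g (a' (Sum.inr ()))) = g ∘ a' := by
    rw [← hg]
    ext (i | i) <;> rfl
  rw [this]
  exact (sameType_equiv_comp g a').symm.trans haa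

/-- The finite partial elementary maps between two structures. -/
def FinitePartialElementary (L : FirstOrder.Language) (M N : Type*) [L.Structure M]
    [L.Structure N] : Type _ :=
  {s : Finset (M × N) // SameType L (fun x : s => x.1.1) (fun x : s => x.1.2)}

instance : Preorder (FinitePartialElementary L M N) :=
  inferInstanceAs (Preorder {_s : Finset (M × N) // _})

theorem FinitePartialElementary.exists_insert (s : FinitePartialElementary L M N) {c : M} {d : N}
    (h : SameType L (Sum.elim (fun x : s.1 => x.1.1) fun _ : Unit => c)
      (Sum.elim (fun x : s.1 => x.1.2) fun _ => d)) :
    ∃ t : FinitePartialElementary L M N, (c, d) ∈ t.1 ∧ s ≤ t := by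
  classical
  let σ : (insert (c, d) s.1 : Finset (M × N)) → s.1 ⊕ Unit := fun x =>
    if hx : x.1 ∈ s.1 then Sum.inl ⟨x.1, hx⟩ else Sum.inr ()
  have hσ : ∀ x : (insert (c, d) s.1 : Finset (M × N)), x.1 ∉ s.1 →
      x.1 = (c, d) := fun x hx => (Finset.mem_insert.1 x.2).resolve_right hx
  refine ⟨⟨insert (c, d) s.1, ?_⟩, Finset.mem_insert_self _ _, Finset.subset_insert _ _⟩
  convert h.comp σ using 1
  all_goals
    ext x
    by_cases hx : x.1 ∈ s.1
    · simp [σ, hx]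
    · have hcd := hσ x hx ▸ hx
      simp [σ, hcd, hσ x hx]

/-- A relation which is total on both sides and whose finite parts are elementary induces an
isomorphism. -/
theorem nonempty_equiv_of_relation (U : Set (M × N)) (hl : ∀ m, ∃ n, (m, n) ∈ U)
    (hr : ∀ n, ∃ m, (m, n) ∈ U)
    (hU : ∀ (k : ℕ) (x : Fin k → M × N), (∀ i, x i ∈ U) →
      SameType L (fun i => (x i).1) (fun i => (x i).2)) : Nonempty (M ≃[L] N) := by
  choose f hf using hl
  choose g hg using hr
  have heq : ∀ p ∈ U, ∀ q ∈ U, (p.1 = q.1 ↔ p.2 = q.2) := fun p hp q hq =>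
    (hU 2 ![p, q] (Fin.forall_fin_two.2 ⟨hp, hq⟩)).eq_iff 0 1
  refine ⟨⟨⟨f, g, fun m => (heq _ (hg (f m)) _ (hf m)).2 rfl,
    fun n => (heq _ (hf (g n)) _ (hg n)).1 rfl⟩, fun {k} F x => ?_, fun {k} R x => ?_⟩⟩
  · have h := hU (k + 1) (fun i => ((Fin.cons (Structure.funMap F x) x : Fin (k + 1) → M) i,
      f ((Fin.cons (Structure.funMap F x) x : Fin (k + 1) → M) i))) (fun i => hf _)
      (Formula.graph F)
    have h' := h.1 (Formula.realize_graph.2 rfl)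
    have hc : (fun i => f ((Fin.cons (Structure.funMap F x) x : Fin (k + 1) → M) i)) =
        (Fin.cons (f (Structure.funMap F x)) (f ∘ x) : Fin (k + 1) → N) := by
      ext i
      refine Fin.cases ?_ (fun j => ?_) i <;> simp
    rw [hc, Formula.realize_graph] at h'
    exact h'.symm
  · have h := hU k (fun i => (x i, f (x i))) (fun i => hf _) (R.formula Term.var)
    simp only [Formula.realize_rel, Term.realize_var] at h
    exact h.symm

theorem IsFull.nonempty_equiv [Countable M] [Countable N] (hM : IsFull L M)
    (hN : N ⊨ L.completeTheory M) : Nonempty (M ≃[L] N) := by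
  have := Encodable.ofCountable M
  have := Encodable.ofCountable N
  let D : M ⊕ N → Order.Cofinal (FinitePartialElementary L M N) := Sum.elim
    (fun m => ⟨{s | ∃ n, (m, n) ∈ s.1}, fun s => by
      obtain ⟨d, hd⟩ := hM.exists_extension_right hN s.2 m
      obtain ⟨t, ht, hst⟩ := s.exists_insert hd
      exact ⟨t, ⟨d, ht⟩, hst⟩⟩)
    (fun n => ⟨{s | ∃ m, (m, n) ∈ s.1}, fun s => by
      obtain ⟨c, hc⟩ := hM.exists_extension_left hN s.2 n
      obtain ⟨t, ht, hst⟩ := s.exists_insert hc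
      exact ⟨t, ⟨c, ht⟩, hst⟩⟩)
  let p : FinitePartialElementary L M N := ⟨∅, sameType_of_isEmpty hN _ _⟩
  let S := Order.sequenceOfCofinals p D
  refine nonempty_equiv_of_relation {x | ∃ k, x ∈ (S k).1} (fun m => ?_) (fun n => ?_)
    (fun k x hx => ?_)
  · obtain ⟨n, hn⟩ := Order.sequenceOfCofinals.encode_mem p D (Sum.inl m)
    exact ⟨n, _, hn⟩
  · obtain ⟨m, hm⟩ := Order.sequenceOfCofinals.encode_mem p D (Sum.inr n)
    exact ⟨m, _, hm⟩
  · choose j hj using hx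
    have hmem : ∀ i, x i ∈ (S (Finset.univ.sup j)).1 := fun i =>
      Order.sequenceOfCofinals.monotone p D (Finset.le_sup (Finset.mem_univ i)) (hj i)
    exact (S (Finset.univ.sup j)).2.comp fun i => ⟨x i, hmem i⟩

end FirstOrder.Language

/-- A countable structure (in a language of arbitrary cardinality) that is full —
i.e. every automorphism-invariant subset of `Mⁿ` is definable without parameters —
is `ℵ₀`-categorical: every countable model of its complete theory is isomorphic to it. -/
theorem aleph0_categorical_of_full {L : FirstOrder.Language} {M : Type*}
    [L.Structure M] [Countable M]
    (hfull : ∀ (n : ℕ) (s : Set (Fin n → M)),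
      (∀ (g : M ≃[L] M) (v : Fin n → M), v ∈ s ↔ (g ∘ v) ∈ s) →
      ∃ φ : L.Formula (Fin n), s = {v | φ.Realize v}) :
    ∀ (N : Type*) [L.Structure N] [Countable N],
      N ⊨ L.completeTheory M → Nonempty (M ≃[L] N) := by
  exact fun N _ _ hN => IsFull.nonempty_equiv hfull hN
end

section
/- Let L be a first-order language (of arbitrary cardinality) and let M be a countable L-structure that is qf-full, i.e., such that for every n ∈ ℕ, every subset of Mⁿ invariant under all automorphisms of M is definable in M by a quantifier-free formula without parameters. Then M is ultrahomogeneous: every isomorphism between finitely generated substructures of M extends to an automorphism of M. -/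
open FirstOrder FirstOrder.Language

namespace FirstOrder.Language

/-- Quantifier-free formulas without bound variables are preserved and reflected by embeddings. -/
lemma Formula.realize_comp_embedding_of_isQF {L : Language} {α M N : Type*} [L.Structure M]
    [L.Structure N] {φ : L.Formula α} (hφ : φ.IsQF) (f : M ↪[L] N) (v : α → M) :
    φ.Realize (f ∘ v) ↔ φ.Realize v := by
  rw [Formula.Realize, Formula.Realize, ← hφ.realize_embedding f, Subsingleton.elim (f ∘ default)]

end FirstOrder.Language

/-- A countable structure (in a language of arbitrary cardinality) that is qf-full —
i.e. every automorphism-invariant subset of `Mⁿ` is definable by a quantifier-free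
formula without parameters — is ultrahomogeneous: every isomorphism between finitely
generated substructures extends to an automorphism. -/
theorem ultrahomogeneous_of_qfFull {L : FirstOrder.Language} {M : Type*}
    [L.Structure M] [Countable M]
    (hqffull : ∀ (n : ℕ) (s : Set (Fin n → M)),
      (∀ (g : M ≃[L] M) (v : Fin n → M), v ∈ s ↔ (g ∘ v) ∈ s) →
      ∃ φ : L.Formula (Fin n), φ.IsQF ∧ s = {v | φ.Realize v}) :
    ∀ (S T : L.Substructure M), S.FG → T.FG → ∀ f : S ≃[L] T,
      ∃ g : M ≃[L] M, ∀ x : S, g (x : M) = ((f x : T) : M) := by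
  intro S T hS _ f
  obtain ⟨n, w, hw⟩ := Substructure.fg_iff_exists_fin_generating_family.1
    (Structure.fg_def.1 ((Substructure.fg_iff_structure_fg S).1 hS))
  let e : S ↪[L] M := T.subtype.comp f.toEmbedding
  obtain ⟨φ, hφ, horbit⟩ := hqffull n {v | ∃ g : M ≃[L] M, g ∘ S.subtype ∘ w = v} <| by
    refine fun g v => ⟨?_, ?_⟩
    · rintro ⟨k, rfl⟩
      exact ⟨g.comp k, rfl⟩
    · rintro ⟨k, hk⟩
      refine ⟨g.symm.comp k, funext fun i => ?_⟩
      have hi : k (w i) = g (v i) := congrFun hk i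
      simp [hi]
  have hw_mem : φ.Realize (S.subtype ∘ w) :=
    horbit.subset ⟨Language.Equiv.refl L M, rfl⟩
  have he_mem : φ.Realize (e ∘ w) :=
    (Formula.realize_comp_embedding_of_isQF hφ e w).2
      ((Formula.realize_comp_embedding_of_isQF hφ S.subtype w).1 hw_mem)
  obtain ⟨g, hg⟩ := horbit.superset he_mem
  have hge : (g.toEmbedding.comp S.subtype).toHom = e.toHom :=
    Hom.eq_of_eqOn_dense hw <| by
      rintro _ ⟨i, rfl⟩
      exact congrFun hg i
  exact ⟨g, fun x => DFunLike.congr_fun hge x⟩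
end
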